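/- arXiv:2007.14231 — 2 statements merged into one kernel-verified Lean document; each statement's English description precedes it below -/
import Mathlib

section
/- Let A, B, C ∈ ℝ² be affinely independent. Then the area distance functional f₂ of the triangle ABC attains a global minimum on ℝ², and the global minimizer is unique: there exists exactly one m ∈ ℝ² with f₂(m) ≤ f₂(X) for all X ∈ ℝ². -/
/-!
The functional `f X = ∫_T ‖P - X‖ dP` over the triangle `T` is continuous, since `T` is compact,
and it is coercive: `f X ≥ vol(T) ‖X‖ - ∫_T ‖P‖ dP` with `vol(T) > 0` because a nondegenerate
triangle has nonempty interior. Hence a minimizer exists.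

For uniqueness, `f` is strictly convex at midpoints (`areaDist_midpoint_lt`). The pointwise
inequality `2 ‖P - midpoint X Y‖ ≤ ‖P - X‖ + ‖P - Y‖` is an equality only if `P - X` and `P - Y`
lie on the same ray, which for `X ≠ Y` puts `P` on the line `XY` (`mem_line_of_sameRay`). That line
is Lebesgue-null, so it cannot contain almost every point of `T`, and integrating gives a strict
inequality. Two distinct minimizers would thus be beaten by their midpoint.
-/

open MeasureTheory Metric Filter

noncomputable section

abbrev Plane := EuclideanSpace ℝ (Fin 2)

/-- The area distance functional of the triangle `ABC`. -/
noncomputable def areaDist (A B C X : Plane) : ℝ :=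
  ∫ P in convexHull ℝ ({A, B, C} : Set Plane), ‖P - X‖

theorem isCompact_triangle (A B C : Plane) :
    IsCompact (convexHull ℝ ({A, B, C} : Set Plane)) :=
  (Set.toFinite _).isCompact_convexHull ℝ

theorem volume_triangle_pos (A B C : Plane) (hAI : AffineIndependent ℝ ![A, B, C]) :
    0 < volume (convexHull ℝ ({A, B, C} : Set Plane)) := by
  refine Measure.measure_pos_of_nonempty_interior _ ?_
  rw [interior_convexHull_nonempty_iff_affineSpan_eq_top]
  have h : affineSpan ℝ (Set.range ![A, B, C]) = ⊤ :=
    hAI.affineSpan_eq_top_iff_card_eq_finrank_add_one.2 (by simp)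
  have hr : Set.range ![A, B, C] = {A, B, C} := by
    simp only [Matrix.range_cons, Matrix.range_empty, Set.union_empty, Set.singleton_union]
  rwa [hr] at h

theorem integrableOn_dist (A B C X : Plane) :
    IntegrableOn (fun P : Plane => ‖P - X‖) (convexHull ℝ ({A, B, C} : Set Plane)) :=
  ContinuousOn.integrableOn_compact (isCompact_triangle A B C) (by fun_prop)

theorem volume_line_eq_zero (X Y : Plane) :
    volume (line[ℝ, X, Y] : Set Plane) = 0 := by
  refine Measure.addHaar_affineSubspace _ _ fun h => ?_
  have h1 : Module.finrank ℝ (vectorSpan ℝ ({X, Y} : Set Plane)) ≤ 1 :=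
    (collinear_iff_finrank_le_one (k := ℝ)).1 (collinear_pair ℝ X Y)
  rw [← direction_affineSpan, h, AffineSubspace.direction_top, finrank_top] at h1
  simp at h1

/-- If `X ≠ Y` and the vectors from `X` and `Y` to `P` point in the same direction, then `P` lies
on the line `XY`. -/
theorem mem_line_of_sameRay {X Y P : Plane} (hXY : X ≠ Y) (h : SameRay ℝ (P - X) (P - Y)) :
    P ∈ line[ℝ, X, Y] := by
  obtain ⟨a, b, -, -, -, h1, h2⟩ := h.exists_eq_smul_add
  set w := P - X + (P - Y)
  have hd : Y - X = (a - b) • w := by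
    rw [sub_smul, ← h1, ← h2]; abel
  have hab : a - b ≠ 0 := by
    intro h0
    rw [h0, zero_smul, sub_eq_zero] at hd
    exact hXY hd.symm
  have hP : P = AffineMap.lineMap X Y (a / (a - b)) := by
    rw [AffineMap.lineMap_apply_module', hd, smul_smul, div_mul_cancel₀ _ hab, ← h1]
    abel
  rw [hP]
  exact AffineMap.lineMap_mem_affineSpan_pair _ _ _

theorem continuous_areaDist (A B C : Plane) : Continuous (areaDist A B C) := by
  unfold areaDist
  exact continuous_parametric_integral_of_continuous
    (f := fun X P : Plane => ‖P - X‖) (by unfold Function.uncurry; fun_prop)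
    (isCompact_triangle A B C)

theorem tendsto_areaDist_cocompact (A B C : Plane) (hAI : AffineIndependent ℝ ![A, B, C]) :
    Tendsto (areaDist A B C) (cocompact Plane) atTop := by
  set T := convexHull ℝ ({A, B, C} : Set Plane) with hT
  have hfin : volume T ≠ ⊤ := (isCompact_triangle A B C).measure_ne_top
  have hpos : 0 < volume.real T :=
    ENNReal.toReal_pos (volume_triangle_pos A B C hAI).ne' hfin
  have h0 : IntegrableOn (fun P : Plane => ‖P‖) T := by
    simpa using integrableOn_dist A B C 0
  have hlow : ∀ X, volume.real T * ‖X‖ + -∫ P in T, ‖P‖ ≤ areaDist A B C X := by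
    intro X
    have hc : IntegrableOn (fun _ : Plane => ‖X‖) T := integrableOn_const hfin
    have h1 : ∫ P in T, (‖X‖ - ‖P‖) ≤ ∫ P in T, ‖P - X‖ :=
      integral_mono (hc.sub h0) (integrableOn_dist A B C X) fun P => by
        simpa [norm_sub_rev] using norm_sub_norm_le X P
    rw [integral_sub hc h0, setIntegral_const, smul_eq_mul, sub_eq_add_neg] at h1
    exact h1
  refine tendsto_atTop_mono hlow (tendsto_atTop_add_const_right _ _ ?_)
  exact (tendsto_norm_cocompact_atTop (E := Plane)).const_mul_atTop hpos

/-- Strict midpoint convexity of the area distance functional. -/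
theorem areaDist_midpoint_lt (A B C : Plane) (hAI : AffineIndependent ℝ ![A, B, C])
    {X Y : Plane} (hXY : X ≠ Y) :
    2 * areaDist A B C (midpoint ℝ X Y) < areaDist A B C X + areaDist A B C Y := by
  set T := convexHull ℝ ({A, B, C} : Set Plane) with hT
  have hX := integrableOn_dist A B C X
  have hY := integrableOn_dist A B C Y
  have hM := (integrableOn_dist A B C (midpoint ℝ X Y)).const_mul 2
  have hmid : ∀ P : Plane, 2 * ‖P - midpoint ℝ X Y‖ = ‖(P - X) + (P - Y)‖ := by
    intro P
    have : (P - X) + (P - Y) = (2 : ℝ) • (P - midpoint ℝ X Y) := by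
      rw [midpoint_eq_smul_add, smul_sub, smul_smul]
      simp only [invOf_eq_inv, mul_inv_cancel₀ (two_ne_zero' ℝ), one_smul, two_smul]
      abel
    rw [this, norm_smul]; simp
  have hle : ∀ P : Plane, 2 * ‖P - midpoint ℝ X Y‖ ≤ ‖P - X‖ + ‖P - Y‖ := fun P =>
    (hmid P).trans_le (norm_add_le _ _)
  have eM : 2 * areaDist A B C (midpoint ℝ X Y) = ∫ P in T, 2 * ‖P - midpoint ℝ X Y‖ :=
    (integral_const_mul _ _).symm
  have eXY : areaDist A B C X + areaDist A B C Y = ∫ P in T, (‖P - X‖ + ‖P - Y‖) :=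
    (integral_add hX hY).symm
  rw [eM, eXY]
  refine lt_of_le_of_ne (integral_mono hM (hX.add hY) hle) fun heq => ?_
  have hae := (integral_eq_iff_of_ae_le hM (hX.add hY) (Eventually.of_forall hle)).1 heq
  have hline : ∀ᵐ P ∂(volume.restrict T), P ∈ (line[ℝ, X, Y] : Set Plane) := by
    filter_upwards [hae] with P hP
    exact mem_line_of_sameRay hXY (sameRay_iff_norm_add.2 ((hmid P).symm.trans hP))
  have hoff : ∀ᵐ P ∂(volume.restrict T), P ∉ (line[ℝ, X, Y] : Set Plane) :=
    ae_restrict_of_ae (measure_eq_zero_iff_ae_notMem.1 (volume_line_eq_zero X Y))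
  have hfalse : ∀ᵐ P ∂(volume.restrict T), False := by
    filter_upwards [hline, hoff] with P h1 h2 using h2 h1
  rw [eventually_false_iff_eq_bot, ae_eq_bot, Measure.restrict_eq_zero] at hfalse
  exact (volume_triangle_pos A B C hAI).ne' hfalse

/-- For a nondegenerate triangle, the area distance functional attains a global
minimum at exactly one point. -/
theorem median_area_exists_unique
    (A B C : Plane) (hAI : AffineIndependent ℝ ![A, B, C]) :
    ∃! m : Plane, ∀ X : Plane, areaDist A B C m ≤ areaDist A B C X := by
  obtain ⟨m, hm⟩ := (continuous_areaDist A B C).exists_forall_le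
    (tendsto_areaDist_cocompact A B C hAI)
  refine ⟨m, hm, fun n hn => ?_⟩
  by_contra hne
  have h := areaDist_midpoint_lt A B C hAI hne
  linarith [hn (midpoint ℝ n m), hm (midpoint ℝ n m)]
end
end

section
/- There exist points A, B, C ∈ ℝ² with B = C and A ≠ B (a degenerate isosceles triangle with base of zero length), and two sequences (Aₙ, Bₙ, Cₙ) and (Aₙ′, Bₙ′, Cₙ′) of affinely independent triples in ℝ², both converging to (A, B, C), together with global minimizers mₙ of X ↦ ‖Aₙ − X‖ + ‖Bₙ − X‖ + ‖Cₙ − X‖ and mₙ′ of X ↦ ‖Aₙ′ − X‖ + ‖Bₙ′ − X‖ + ‖Cₙ′ − X‖, such that the barycentric coordinates of mₙ with respect to (Aₙ, Bₙ, Cₙ) and the barycentric coordinates of mₙ′ with respect to (Aₙ′, Bₙ′, Cₙ′) both converge, but to different limits. In other words, the map sending a triangle to the barycentric coordinates of its Fermat–Torricelli point has no continuous extension to degenerate isosceles triangles with zero-length base. -/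
/-!
When a triangle has an angle of at least `120°`, its Fermat–Torricelli point is the vertex of that
angle (`fermat_at_vertex`), so its barycentric coordinates are a standard basis vector. A triangle
with such an angle can have an arbitrarily short side at the obtuse vertex: take the vertices
`(0, 1)`, `0` and `t (3/5, -4/5)`, whose angle at `0` has cosine `-4/5`, and let `t → 0`. The obtuse
vertex is `0`, and labelling it `B` gives the constant coordinates `(0, 1, 0)`, while labelling
it `C` gives `(0, 0, 1)`. Both families converge to the same degenerate triangle.
-/

open MeasureTheory Metric Filter

noncomputable section

/-- If `u`, `v` are unit vectors with `‖u + v‖ ≤ 1` (an angle of at least `120°`), then the vertex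
`0` minimizes the sum of distances to `p • u`, `q • v` and `0`: for `0 ≤ p, q` the value at `0` is
`p + q`. The unit vectors serve as subgradients of the two distance functions. -/
lemma fermat_at_vertex {u v : Plane} (hu : ‖u‖ = 1) (hv : ‖v‖ = 1) (huv : ‖u + v‖ ≤ 1)
    (p q : ℝ) (X : Plane) : p + q ≤ ‖p • u - X‖ + ‖X‖ + ‖q • v - X‖ := by
  have h1 := real_inner_le_norm u (p • u - X)
  have h2 := real_inner_le_norm v (q • v - X)
  have h3 := real_inner_le_norm (u + v) X
  have h4 : ‖u + v‖ * ‖X‖ ≤ ‖X‖ := mul_le_of_le_one_left (norm_nonneg X) huv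
  rw [inner_sub_right, inner_smul_right, real_inner_self_eq_norm_sq, hu] at h1
  rw [inner_sub_right, inner_smul_right, real_inner_self_eq_norm_sq, hv] at h2
  rw [inner_add_left] at h3
  linarith

/-- The direction of `(0, 1)` seen from the obtuse vertex `0`. -/
def dirU : Plane := !₂[0, 1]

/-- The direction of the collapsing vertex seen from `0`, at an angle of cosine `-4/5` with `dirU`. -/
def dirV : Plane := !₂[3 / 5, -4 / 5]

lemma norm_dirU : ‖dirU‖ = 1 := by
  simp [dirU, EuclideanSpace.norm_eq, Fin.sum_univ_two]

lemma norm_dirV : ‖dirV‖ = 1 := by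
  simp [dirV, EuclideanSpace.norm_eq, Fin.sum_univ_two]
  norm_num

lemma norm_dirU_add_dirV : ‖dirU + dirV‖ ≤ 1 := by
  rw [EuclideanSpace.norm_eq]
  refine Real.sqrt_le_iff.mpr ⟨zero_le_one, ?_⟩
  simp [dirU, dirV, Fin.sum_univ_two]
  norm_num

lemma affineIndependent_triangle {q : ℝ} (hq : q ≠ 0) :
    AffineIndependent ℝ ![dirU, 0, q • dirV] := by
  rw [affineIndependent_iff_not_collinear_set,
    collinear_iff_of_mem (p₀ := (0 : Plane)) (by simp)]
  rintro ⟨w, hw⟩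
  obtain ⟨a, ha⟩ := hw dirU (by simp)
  obtain ⟨b, hb⟩ := hw (q • dirV) (by simp)
  have a0 := congrArg (fun x : Plane => x 0) ha
  have a1 := congrArg (fun x : Plane => x 1) ha
  have b0 := congrArg (fun x : Plane => x 0) hb
  simp [dirU, dirV] at a0 a1 b0
  grind

/-- The map sending a triangle to the barycentric coordinates of its Fermat–Torricelli
point has no continuous extension to degenerate isosceles triangles with zero-length
base: there are two sequences of nondegenerate triangles converging to the same
degenerate isosceles triangle whose Fermat–Torricelli barycentric coordinates converge
to different limits. -/
theorem fermat_torricelli_no_continuous_extension :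
    ∃ A B C : Plane, B = C ∧ A ≠ B ∧
      ∃ (An Bn Cn An' Bn' Cn' mn mn' : ℕ → Plane)
        (μ1 μ2 μ3 μ1' μ2' μ3' : ℕ → ℝ) (l1 l2 l3 l1' l2' l3' : ℝ),
        (∀ n, AffineIndependent ℝ ![An n, Bn n, Cn n]) ∧
        (∀ n, AffineIndependent ℝ ![An' n, Bn' n, Cn' n]) ∧
        Tendsto An atTop (nhds A) ∧ Tendsto Bn atTop (nhds B) ∧
        Tendsto Cn atTop (nhds C) ∧
        Tendsto An' atTop (nhds A) ∧ Tendsto Bn' atTop (nhds B) ∧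
        Tendsto Cn' atTop (nhds C) ∧
        (∀ n, ∀ X : Plane,
          ‖An n - mn n‖ + ‖Bn n - mn n‖ + ‖Cn n - mn n‖ ≤
            ‖An n - X‖ + ‖Bn n - X‖ + ‖Cn n - X‖) ∧
        (∀ n, ∀ X : Plane,
          ‖An' n - mn' n‖ + ‖Bn' n - mn' n‖ + ‖Cn' n - mn' n‖ ≤
            ‖An' n - X‖ + ‖Bn' n - X‖ + ‖Cn' n - X‖) ∧
        (∀ n, μ1 n + μ2 n + μ3 n = 1) ∧
        (∀ n, mn n = μ1 n • An n + μ2 n • Bn n + μ3 n • Cn n) ∧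
        (∀ n, μ1' n + μ2' n + μ3' n = 1) ∧
        (∀ n, mn' n = μ1' n • An' n + μ2' n • Bn' n + μ3' n • Cn' n) ∧
        Tendsto μ1 atTop (nhds l1) ∧ Tendsto μ2 atTop (nhds l2) ∧
        Tendsto μ3 atTop (nhds l3) ∧
        Tendsto μ1' atTop (nhds l1') ∧ Tendsto μ2' atTop (nhds l2') ∧
        Tendsto μ3' atTop (nhds l3') ∧
        (l1, l2, l3) ≠ (l1', l2', l3') := by
  let q : ℕ → ℝ := fun n => 1 / ((n : ℝ) + 1)
  have hq : ∀ n, 0 < q n := fun n => Nat.one_div_pos_of_nat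
  have hlim : Tendsto (fun n => q n • dirV) atTop (nhds 0) := by
    simpa only [zero_smul] using (tendsto_one_div_add_atTop_nhds_zero_nat (𝕜 := ℝ)).smul_const dirV
  have hmin : ∀ n (X : Plane), 1 + q n ≤ ‖dirU - X‖ + ‖X‖ + ‖q n • dirV - X‖ := fun n X => by
    simpa using fermat_at_vertex norm_dirU norm_dirV norm_dirU_add_dirV 1 (q n) X
  have hnorm : ∀ n, ‖q n • dirV‖ = q n := fun n => by
    rw [norm_smul, norm_dirV, mul_one, Real.norm_of_nonneg (hq n).le]
  refine ⟨dirU, 0, 0, rfl, fun h => by simpa [h] using norm_dirU,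
    fun _ => dirU, fun _ => 0, fun n => q n • dirV,
    fun _ => dirU, fun n => q n • dirV, fun _ => 0, fun _ => 0, fun _ => 0,
    fun _ => 0, fun _ => 1, fun _ => 0, fun _ => 0, fun _ => 0, fun _ => 1,
    0, 1, 0, 0, 0, 1,
    fun n => affineIndependent_triangle (hq n).ne', fun n => ?_,
    tendsto_const_nhds, tendsto_const_nhds, hlim, tendsto_const_nhds, hlim, tendsto_const_nhds,
    fun n X => ?_, fun n X => ?_, by simp, by simp, by simp, by simp,
    tendsto_const_nhds, tendsto_const_nhds, tendsto_const_nhds,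
    tendsto_const_nhds, tendsto_const_nhds, tendsto_const_nhds, by simp⟩
  · exact (affineIndependent_triangle (hq n).ne').comm_right
  · have := hmin n X
    simp only [sub_zero, zero_sub, norm_neg, norm_zero, norm_dirU, hnorm]
    linarith
  · have := hmin n X
    simp only [sub_zero, zero_sub, norm_neg, norm_zero, norm_dirU, hnorm]
    linarith
end
end
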